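/- The 4-form Θ01 = θ0i∧θ1i + θ0j∧θ1j + θ0k∧θ1k is primitive with respect to the symplectic form θs: Θ01∧θs = 0. -/

import Mathlib

/-!
Write `y` for the coframe `dy1, …, dy4` and `D` for the substitution of `dx`'s for `dy`'s, one
factor at a time. Up to reordering the `dy`'s, which does not affect `θs`, each `θ0q` is the Kähler
form `ω = y₀ ∧ y₁ + y₂ ∧ y₃`, and `θ1q` is `D ω`. As `ω` has even degree and `ω ∧ ω = 2 vol` with
`vol = y₀ ∧ y₁ ∧ y₂ ∧ y₃`, one has `ω ∧ D ω = D vol`. Now `D vol` is the sum over `i` of `vol` with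
`yᵢ` replaced by `xᵢ`, and multiplying such a term by `yⱼ ∧ xⱼ` repeats `yⱼ` if `j ≠ i`, and repeats
`xᵢ` if `j = i`. So already each `θ0q ∧ θ1q` is primitive.
-/

noncomputable section

open ExteriorAlgebra

/-- Basis 1-forms of the dual of `ℝ^8`, modelled as generators of the exterior algebra of an
8-dimensional real vector space. -/
def e8 (i : Fin 8) : ExteriorAlgebra ℝ (Fin 8 → ℝ) :=
  ExteriorAlgebra.ι ℝ (Pi.single i 1)

def dx1 : ExteriorAlgebra ℝ (Fin 8 → ℝ) := e8 0
def dx2 : ExteriorAlgebra ℝ (Fin 8 → ℝ) := e8 1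
def dx3 : ExteriorAlgebra ℝ (Fin 8 → ℝ) := e8 2
def dx4 : ExteriorAlgebra ℝ (Fin 8 → ℝ) := e8 3
def dy1 : ExteriorAlgebra ℝ (Fin 8 → ℝ) := e8 4
def dy2 : ExteriorAlgebra ℝ (Fin 8 → ℝ) := e8 5
def dy3 : ExteriorAlgebra ℝ (Fin 8 → ℝ) := e8 6
def dy4 : ExteriorAlgebra ℝ (Fin 8 → ℝ) := e8 7

def θ0i : ExteriorAlgebra ℝ (Fin 8 → ℝ) := dy1 * dy2 - dy3 * dy4
def θ0j : ExteriorAlgebra ℝ (Fin 8 → ℝ) := dy1 * dy3 + dy2 * dy4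
def θ0k : ExteriorAlgebra ℝ (Fin 8 → ℝ) := dy1 * dy4 - dy2 * dy3
def θ1i : ExteriorAlgebra ℝ (Fin 8 → ℝ) := dy1 * dx2 - dy2 * dx1 + dy4 * dx3 - dy3 * dx4
def θ1j : ExteriorAlgebra ℝ (Fin 8 → ℝ) := dy1 * dx3 + dy2 * dx4 - dy3 * dx1 - dy4 * dx2
def θ1k : ExteriorAlgebra ℝ (Fin 8 → ℝ) := dy1 * dx4 - dy4 * dx1 + dy3 * dx2 - dy2 * dx3
def θ2i : ExteriorAlgebra ℝ (Fin 8 → ℝ) := dx1 * dx2 - dx3 * dx4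
def θ2j : ExteriorAlgebra ℝ (Fin 8 → ℝ) := dx1 * dx3 + dx2 * dx4
def θ2k : ExteriorAlgebra ℝ (Fin 8 → ℝ) := dx1 * dx4 - dx2 * dx3
def θs : ExteriorAlgebra ℝ (Fin 8 → ℝ) := -(dy1 * dx1 + dy2 * dx2 + dy3 * dx3 + dy4 * dx4)

open Equiv

section Primitive

variable {R M : Type*} [CommRing R] [AddCommGroup M] [Module R M]

theorem ι_mul_ι_swap (a b : M) : ι R a * ι R b = -(ι R b * ι R a) :=
  eq_neg_of_add_eq_zero_left (ι_add_mul_swap a b)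

theorem ι_mul_ι_mem_center (a b : M) :
    ι R a * ι R b ∈ Subalgebra.center R (ExteriorAlgebra R M) := by
  refine Subalgebra.mem_center_iff.mpr fun z => ?_
  induction z using ExteriorAlgebra.induction with
  | algebraMap r => exact Algebra.commutes r _
  | ι c =>
    calc ι R c * (ι R a * ι R b) = -(ι R a * (ι R c * ι R b)) := by
          rw [← mul_assoc, ι_mul_ι_swap c a, neg_mul, mul_assoc]
      _ = ι R a * ι R b * ι R c := by
          rw [ι_mul_ι_swap c b, mul_neg, neg_neg, mul_assoc]
  | mul u v hu hv => exact Commute.mul_left hu hv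
  | add u v hu hv => exact Commute.add_left hu hv

theorem ι_mul_ιMulti_eq_zero_of_mem_range {n : ℕ} {v : Fin n → M} {a : M}
    (ha : a ∈ Set.range v) : ι R a * ιMulti R n v = 0 := by
  obtain ⟨i, rfl⟩ := ha
  rw [ιMulti_apply, ι_mul_prod_list]

theorem ιMulti_mul_ι_mul_ι_eq_zero_of_mem_range {n : ℕ} {v : Fin n → M} {a b : M}
    (h : a ∈ Set.range v ∨ b ∈ Set.range v) : ιMulti R n v * (ι R a * ι R b) = 0 := by
  rw [Subalgebra.mem_center_iff.mp (ι_mul_ι_mem_center a b)]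
  rcases h with ha | hb
  · rw [ι_mul_ι_swap, neg_mul, mul_assoc, ι_mul_ιMulti_eq_zero_of_mem_range ha, mul_zero, neg_zero]
  · rw [mul_assoc, ι_mul_ιMulti_eq_zero_of_mem_range hb, mul_zero]

variable (R) in
/-- The 2-form `∑ᵢ yᵢ ∧ xᵢ`, which is symplectic when the `yᵢ` and `xᵢ` together are a coframe. In
this sign convention `θs` is its negative. -/
def symplecticForm {κ : Type*} [Fintype κ] (y x : κ → M) : ExteriorAlgebra R M :=
  ∑ i, ι R (y i) * ι R (x i)

theorem symplecticForm_comp_perm {κ : Type*} [Fintype κ] (y x : κ → M) (σ : Perm κ) :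
    symplecticForm R (y ∘ σ) (x ∘ σ) = symplecticForm R y x :=
  Equiv.sum_comp σ fun i => ι R (y i) * ι R (x i)

theorem linearDeriv_ιMulti_mul_symplecticForm {n : ℕ} (y x : Fin n → M) :
    (ιMulti R n).toMultilinearMap.linearDeriv y x * symplecticForm R y x = 0 := by
  rw [MultilinearMap.linearDeriv_apply, symplecticForm, Finset.sum_mul_sum]
  refine Finset.sum_eq_zero fun i _ => Finset.sum_eq_zero fun j _ =>
    ιMulti_mul_ι_mul_ι_eq_zero_of_mem_range ?_
  by_cases hji : j = i
  · exact .inr ⟨i, by rw [hji, Function.update_self]⟩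
  · exact .inl ⟨j, Function.update_of_ne hji _ _⟩

variable (R) in
/-- The standard Kähler form `y₀ ∧ y₁ + y₂ ∧ y₃` of a 4-dimensional coframe `y`. Each `θ0q` is of
this form for a reordering of `dy1, …, dy4`. -/
def kahlerForm (y : Fin 4 → M) : ExteriorAlgebra R M :=
  ι R (y 0) * ι R (y 1) + ι R (y 2) * ι R (y 3)

variable (R) in
/-- The derivative of `kahlerForm` at `y` in the direction `x`, that is, its polarization. Each
`θ1q` is of this form. -/
def kahlerFormDeriv (y x : Fin 4 → M) : ExteriorAlgebra R M :=
  (ι R (x 0) * ι R (y 1) + ι R (y 0) * ι R (x 1)) +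
    (ι R (x 2) * ι R (y 3) + ι R (y 2) * ι R (x 3))

theorem ιMulti_four_apply (v : Fin 4 → M) :
    ιMulti R 4 v = ι R (v 0) * ι R (v 1) * (ι R (v 2) * ι R (v 3)) := by
  simp only [ιMulti_succ_apply, ιMulti_zero_apply, Matrix.vecTail, Function.comp_apply, mul_one,
    mul_assoc]
  rfl

theorem ι_mul_ι_mul_ι_mul_ι_eq_zero_of_not_injective {a b c d : M}
    (h : ¬Function.Injective ![a, b, c, d]) : ι R a * ι R b * (ι R c * ι R d) = 0 :=
  (ιMulti_four_apply ![a, b, c, d]).symm.trans (ιMulti_eq_zero_of_not_inj h)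

theorem ι_mul_ι_mul_polarization_eq_zero (a b c d : M) :
    ι R a * ι R b * (ι R c * ι R b + ι R a * ι R d) = 0 := by
  have hb : ι R a * ι R b * (ι R c * ι R b) = 0 :=
    ι_mul_ι_mul_ι_mul_ι_eq_zero_of_not_injective fun h => absurd (@h 1 3 rfl) (by decide)
  have ha : ι R a * ι R b * (ι R a * ι R d) = 0 :=
    ι_mul_ι_mul_ι_mul_ι_eq_zero_of_not_injective fun h => absurd (@h 0 2 rfl) (by decide)
  rw [mul_add, hb, ha, add_zero]

theorem linearDeriv_ιMulti_four_apply (y x : Fin 4 → M) :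
    (ιMulti R 4).toMultilinearMap.linearDeriv y x =
      ι R (y 0) * ι R (y 1) * (ι R (x 2) * ι R (y 3) + ι R (y 2) * ι R (x 3)) +
        (ι R (x 0) * ι R (y 1) + ι R (y 0) * ι R (x 1)) * (ι R (y 2) * ι R (y 3)) := by
  rw [MultilinearMap.linearDeriv_apply]
  simp only [AlternatingMap.coe_multilinearMap, ιMulti_four_apply, Fin.sum_univ_four,
    Function.update_apply, Fin.reduceEq, if_true, if_false, mul_add, add_mul]
  abel

theorem kahlerForm_mul_kahlerFormDeriv (y x : Fin 4 → M) :
    kahlerForm R y * kahlerFormDeriv R y x =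
      (ιMulti R 4).toMultilinearMap.linearDeriv y x := by
  rw [kahlerForm, kahlerFormDeriv, add_mul, mul_add (_ * _) (_ + _), mul_add (_ * _) (_ + _),
    ι_mul_ι_mul_polarization_eq_zero, ι_mul_ι_mul_polarization_eq_zero, zero_add, add_zero,
    ← Subalgebra.mem_center_iff.mp (ι_mul_ι_mem_center (y 2) (y 3)), linearDeriv_ιMulti_four_apply]

theorem kahlerFormDeriv_eq_sub_add_sub (y x : Fin 4 → M) :
    kahlerFormDeriv R y x = (ι R (y 0) * ι R (x 1) - ι R (y 1) * ι R (x 0)) +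
      (ι R (y 2) * ι R (x 3) - ι R (y 3) * ι R (x 2)) := by
  rw [kahlerFormDeriv, ι_mul_ι_swap (x 0), ι_mul_ι_swap (x 2), neg_add_eq_sub, neg_add_eq_sub]

theorem Theta01_primitive_general (y x : Fin 4 → M) (σ : Perm (Fin 4)) :
    kahlerForm R (y ∘ σ) * kahlerFormDeriv R (y ∘ σ) (x ∘ σ) * symplecticForm R y x = 0 := by
  rw [kahlerForm_mul_kahlerFormDeriv, ← symplecticForm_comp_perm y x σ,
    linearDeriv_ιMulti_mul_symplecticForm]

end Primitive

/-- The vectors underlying `dx1, …, dx4`. -/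
def xCoframe (i : Fin 4) : Fin 8 → ℝ := Pi.single (Fin.castAdd 4 i) 1

/-- The vectors underlying `dy1, …, dy4`. -/
def yCoframe (i : Fin 4) : Fin 8 → ℝ := Pi.single (Fin.natAdd 4 i) 1

theorem θs_eq_neg_symplecticForm : θs = -symplecticForm ℝ yCoframe xCoframe := by
  rw [symplecticForm, Fin.sum_univ_four]
  rfl

theorem θ0i_eq_kahlerForm : θ0i = kahlerForm ℝ (yCoframe ∘ swap 2 3) := by
  rw [θ0i, kahlerForm, sub_eq_add_neg, ι_mul_ι_swap ((yCoframe ∘ swap 2 3) 2)]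
  rfl

theorem θ0j_eq_kahlerForm : θ0j = kahlerForm ℝ (yCoframe ∘ swap 1 2) := rfl

theorem θ0k_eq_kahlerForm : θ0k = kahlerForm ℝ (yCoframe ∘ swap 1 3) := by
  rw [θ0k, kahlerForm, sub_eq_add_neg, ι_mul_ι_swap ((yCoframe ∘ swap 1 3) 2)]
  rfl

theorem θ1i_eq_kahlerFormDeriv :
    θ1i = kahlerFormDeriv ℝ (yCoframe ∘ swap 2 3) (xCoframe ∘ swap 2 3) := by
  rw [θ1i, kahlerFormDeriv_eq_sub_add_sub, add_sub_assoc]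
  rfl

theorem θ1j_eq_kahlerFormDeriv :
    θ1j = kahlerFormDeriv ℝ (yCoframe ∘ swap 1 2) (xCoframe ∘ swap 1 2) := by
  rw [θ1j, kahlerFormDeriv_eq_sub_add_sub, sub_sub, add_sub_add_comm]
  rfl

theorem θ1k_eq_kahlerFormDeriv :
    θ1k = kahlerFormDeriv ℝ (yCoframe ∘ swap 1 3) (xCoframe ∘ swap 1 3) := by
  rw [θ1k, kahlerFormDeriv_eq_sub_add_sub, add_sub_assoc]
  rfl

theorem Theta01_primitive :
    (θ0i * θ1i + θ0j * θ1j + θ0k * θ1k) * θs = 0 := by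
  simp only [θ0i_eq_kahlerForm, θ0j_eq_kahlerForm, θ0k_eq_kahlerForm, θ1i_eq_kahlerFormDeriv,
    θ1j_eq_kahlerFormDeriv, θ1k_eq_kahlerFormDeriv, θs_eq_neg_symplecticForm, mul_neg, add_mul,
    Theta01_primitive_general, add_zero, neg_zero]

end
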